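/- arXiv:1710.08513 — 3 statements merged into one kernel-verified Lean document; each statement's English description precedes it below -/
import Mathlib

section
/- For every tensor x ∈ ℝ^{n_1×…×n_d}, the Tucker rank of x — defined as the entrywise-minimal tuple (r_1,…,r_d) such that x admits a Tucker representation x[μ_1,…,μ_d] = Σ_{ν_1=1}^{r_1}⋯Σ_{ν_d=1}^{r_d} c[ν_1,…,ν_d] U_1[μ_1,ν_1]⋯U_d[μ_d,ν_d] with core c ∈ ℝ^{r_1×…×r_d} and basis matrices U_i ∈ ℝ^{n_i×r_i} — exists and equals (rank(M_{{1}}(x)), rank(M_{{2}}(x)), …, rank(M_{{d}}(x))), where M_{{i}}(x) is the i-th mode matricization of x. -/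
/-- The `i`-th mode matricization `M_{{i}}(x)` of a tensor `x ∈ ℝ^{n_0 × … × n_{d-1}}`:
rows are indexed by the `i`-th mode and columns by all remaining modes. -/
def modeMat (d : ℕ) (n : Fin d → ℕ) (x : (∀ k : Fin d, Fin (n k)) → ℝ) (i : Fin d) :
    Matrix (Fin (n i)) (∀ k : {k : Fin d // k ≠ i}, Fin (n k.val)) ℝ := fun μ j =>
  x (fun k => if h : k = i then Fin.cast (congrArg n h).symm μ else j ⟨k, h⟩)

/-- A Tucker representation of `x` with representation rank tuple `ρ`: a core tensor
`c ∈ ℝ^{ρ_1 × … × ρ_d}` and basis matrices `U_i ∈ ℝ^{n_i × ρ_i}` with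
`x[μ] = Σ_ν c[ν] · Π_i U_i[μ_i, ν_i]`. -/
def IsTuckerRepr (d : ℕ) (n : Fin d → ℕ) (x : (∀ k : Fin d, Fin (n k)) → ℝ)
    (ρ : Fin d → ℕ) : Prop :=
  ∃ (c : (∀ i : Fin d, Fin (ρ i)) → ℝ) (U : ∀ i : Fin d, Fin (n i) → Fin (ρ i) → ℝ),
    ∀ μ, x μ = ∑ ν : ∀ i : Fin d, Fin (ρ i), c ν * ∏ i : Fin d, U i (μ i) (ν i)

theorem exists_rank_proj {m : ℕ} {β : Type} [Fintype β] [DecidableEq β]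
    (M : Matrix (Fin m) β ℝ) :
    ∃ (U : Matrix (Fin m) (Fin M.rank) ℝ) (W : Matrix (Fin M.rank) (Fin m) ℝ),
      U * W * M = M := by
  obtain ⟨p, hp⟩ := LinearMap.exists_leftInverse_of_injective
    (LinearMap.range M.mulVecLin).subtype (Submodule.ker_subtype _)
  have e : LinearMap.range M.mulVecLin ≃ₗ[ℝ] (Fin M.rank → ℝ) :=
    LinearEquiv.ofFinrankEq _ _ (by rw [Module.finrank_fin_fun]; rfl)
  refine ⟨LinearMap.toMatrix' ((LinearMap.range M.mulVecLin).subtype ∘ₗ e.symm.toLinearMap),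
    LinearMap.toMatrix' (e.toLinearMap ∘ₗ p), ?_⟩
  apply Matrix.toLin'.injective
  apply LinearMap.ext
  intro v
  have h2 : p (M.mulVecLin v) = ⟨M.mulVecLin v, LinearMap.mem_range_self _ v⟩ :=
    LinearMap.congr_fun hp ⟨M.mulVecLin v, LinearMap.mem_range_self _ v⟩
  rw [Matrix.toLin'_mul, Matrix.toLin'_mul, Matrix.toLin'_toMatrix', Matrix.toLin'_toMatrix']
  have h3 : Matrix.toLin' M v = M.mulVecLin v := rfl
  simp only [LinearMap.comp_apply, h3, h2]
  simp

theorem modeMat_restrict (d : ℕ) (n : Fin d → ℕ) (x : (∀ k : Fin d, Fin (n k)) → ℝ) (i : Fin d)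
    (μ : ∀ k : Fin d, Fin (n k)) (t : Fin (n i)) :
    modeMat d n x i t (fun k => μ k.val) = x (Function.update μ i t) := by
  unfold modeMat
  congr 1
  funext k
  by_cases h : k = i
  · subst h
    simp
  · simp [h]

/-- Apply one matrix in each mode. -/
noncomputable def modeApply (d : ℕ) (n : Fin d → ℕ)
    (Q : ∀ i : Fin d, Matrix (Fin (n i)) (Fin (n i)) ℝ)
    (x : (∀ k : Fin d, Fin (n k)) → ℝ) : (∀ k : Fin d, Fin (n k)) → ℝ :=
  fun μ => ∑ μ' : ∀ k : Fin d, Fin (n k), (∏ i, Q i (μ i) (μ' i)) * x μ'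

theorem sum_prod_mul (d : ℕ) (n m l : Fin d → ℕ)
    (Q : ∀ i : Fin d, Matrix (Fin (n i)) (Fin (m i)) ℝ)
    (R : ∀ i : Fin d, Matrix (Fin (m i)) (Fin (l i)) ℝ)
    (μ : ∀ k : Fin d, Fin (n k)) (κ : ∀ k : Fin d, Fin (l k)) :
    ∏ i, (Q i * R i) (μ i) (κ i) =
      ∑ ν : ∀ k : Fin d, Fin (m k), (∏ i, Q i (μ i) (ν i)) * ∏ i, R i (ν i) (κ i) := by
  simp only [Matrix.mul_apply, ← Finset.prod_mul_distrib]
  rw [Finset.prod_univ_sum]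
  simp

theorem modeApply_mul (d : ℕ) (n : Fin d → ℕ)
    (Q R : ∀ i : Fin d, Matrix (Fin (n i)) (Fin (n i)) ℝ)
    (x : (∀ k : Fin d, Fin (n k)) → ℝ) :
    modeApply d n (fun i => Q i * R i) x = modeApply d n Q (modeApply d n R x) := by
  funext μ
  simp only [modeApply, sum_prod_mul d n n n, Finset.sum_mul, Finset.mul_sum]
  rw [Finset.sum_comm]
  simp only [mul_assoc]

theorem modeApply_single (d : ℕ) (n : Fin d → ℕ)
    (x : (∀ k : Fin d, Fin (n k)) → ℝ) (a : Fin d)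
    (P : ∀ i : Fin d, Matrix (Fin (n i)) (Fin (n i)) ℝ)
    (hP : P a * modeMat d n x a = modeMat d n x a) :
    modeApply d n (fun i => if i = a then P i else 1) x = x := by
  funext μ
  have h1 := congrFun (congrFun hP (μ a)) (fun k => μ k.val)
  rw [Matrix.mul_apply, modeMat_restrict, Function.update_eq_self] at h1
  simp only [modeMat_restrict] at h1
  rw [← h1]
  unfold modeApply
  symm
  apply Fintype.sum_of_injective (fun t => Function.update μ a t)
    (Function.update_injective μ a)
  · intro μ' hμ'
    have : ∃ k, k ≠ a ∧ μ k ≠ μ' k := by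
      by_contra hc
      push Not at hc
      apply hμ'
      refine ⟨μ' a, ?_⟩
      funext k
      by_cases h : k = a
      · subst h
        simp
      · simp [h, hc k h]
    obtain ⟨k, hk, hk2⟩ := this
    rw [Finset.prod_eq_zero (Finset.mem_univ k), zero_mul]
    simp [hk, hk2]
  · intro t
    congr 1
    rw [Finset.prod_eq_single a]
    · simp
    · intro k _ hk
      have e1 : Function.update μ a t k = μ k := Function.update_of_ne hk _ _
      have e2 : (if k = a then P k else 1) = 1 := if_neg hk
      have e3 : (1 : Matrix (Fin (n k)) (Fin (n k)) ℝ) (μ k) (μ k) = 1 := Matrix.one_apply_eq _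
      exact (congrArg _ e1).trans ((congrFun (congrFun e2 (μ k)) (μ k)).trans e3)
    · simp

theorem modeApply_all (d : ℕ) (n : Fin d → ℕ)
    (x : (∀ k : Fin d, Fin (n k)) → ℝ)
    (P : ∀ i : Fin d, Matrix (Fin (n i)) (Fin (n i)) ℝ)
    (hP : ∀ a, P a * modeMat d n x a = modeMat d n x a) :
    modeApply d n P x = x := by
  have key : ∀ s : Finset (Fin d), modeApply d n (fun i => if i ∈ s then P i else 1) x = x := by
    intro s
    induction s using Finset.induction_on with
    | empty =>
      funext μ
      unfold modeApply
      rw [Finset.sum_eq_single μ]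
      · simp
      · intro μ' _ hne
        obtain ⟨k, hk⟩ := Function.ne_iff.mp hne
        rw [Finset.prod_eq_zero (Finset.mem_univ k), zero_mul]
        simp [hk.symm]
      · simp
    | insert a s ha ih =>
      have : (fun i => if i ∈ insert a s then P i else 1) =
          fun i => (if i ∈ s then P i else 1) * (if i = a then P i else 1) := by
        funext i
        by_cases h : i = a
        · subst h
          simp [ha]
        · simp [h]
      rw [this, modeApply_mul, modeApply_single d n x a P (hP a), ih]
  simpa using key Finset.univ

/-- **The Tucker rank equals the tuple of single-mode matricization ranks**
[De Lathauwer–De Moor–Vandewalle].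

For every tensor `x ∈ ℝ^{n_0 × … × n_{d-1}}`: every Tucker representation of `x` with
representation rank `ρ` satisfies `ρ i ≥ rank (M_{{i}}(x))` for every mode `i`, and there
is a Tucker representation achieving equality in every component.  Hence the
entrywise-minimal representation rank tuple (the Tucker rank) exists and equals
`(rank M_{{1}}(x), …, rank M_{{d}}(x))`. -/
theorem tucker_rank_eq_mode_matricization_ranks
    (d : ℕ) (n : Fin d → ℕ) (x : (∀ k : Fin d, Fin (n k)) → ℝ) :
    (∀ ρ : Fin d → ℕ, IsTuckerRepr d n x ρ → ∀ i : Fin d, (modeMat d n x i).rank ≤ ρ i) ∧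
      ∃ ρ : Fin d → ℕ, IsTuckerRepr d n x ρ ∧
        ∀ i : Fin d, ρ i = (modeMat d n x i).rank := by
  constructor
  · rintro ρ ⟨c, U, hx⟩ i
    have hM : modeMat d n x i = (Matrix.of (U i)) *
        (Matrix.of fun (t : Fin (ρ i)) (j : ∀ k : {k : Fin d // k ≠ i}, Fin (n k.val)) =>
          ∑ ν : ∀ k : Fin d, Fin (ρ k), if ν i = t then
            c ν * ∏ k : {k : Fin d // k ≠ i}, U k.val (j k) (ν k.val) else 0) := by
      ext μ j
      rw [Matrix.mul_apply]
      simp only [modeMat, hx, Matrix.of_apply, Finset.mul_sum]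
      rw [Finset.sum_comm]
      refine Finset.sum_congr rfl fun ν _ => ?_
      simp only [mul_ite, mul_zero, Finset.sum_ite_eq, Finset.mem_univ, if_true]
      rw [Fintype.prod_eq_mul_prod_subtype_ne _ i]
      have : ∀ k : {k : Fin d // k ≠ i}, (if h : k.val = i then
          Fin.cast (congrArg n h).symm μ else j ⟨k.val, h⟩) = j k := fun k => dif_neg k.2
      simp only [this]
      simp
      ring
    rw [hM]
    refine (Matrix.rank_mul_le_left _ _).trans ?_
    simpa using Matrix.rank_le_width (Matrix.of (U i))
  · refine ⟨fun i => (modeMat d n x i).rank, ?_, fun i => rfl⟩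
    choose U W h using fun i => exists_rank_proj (modeMat d n x i)
    refine ⟨fun ν => ∑ μ', (∏ i, W i (ν i) (μ' i)) * x μ', U, fun μ => ?_⟩
    have h1 := congrFun (modeApply_all d n x (fun i => U i * W i) h) μ
    rw [← h1]
    simp only [modeApply, sum_prod_mul d n (fun i => (modeMat d n x i).rank) n, Finset.sum_mul]
    rw [Finset.sum_comm]
    refine Finset.sum_congr rfl fun ν _ => Finset.sum_congr rfl fun κ _ => ?_
    ring
end

section
/- Let x ∈ ℝ^{n_1×…×n_d} and let r* = (r_1*,…,r_d*) be a Tucker rank tuple. Let x* be the tensor obtained from x by the truncated higher order singular value decomposition (HOSVD), i.e. by projecting x onto the spans of the leading r_i* left singular vectors of the mode-i matricizations M_{{i}}(x) for i = 1,…,d. Then ‖x − x*‖_F ≤ √d · min_{y : T-rank(y) ⪯ r*} ‖x − y‖_F, where the minimum is over all tensors y whose Tucker rank is entrywise at most r*. -/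
open Matrix

/-- The Frobenius norm of a real matrix. -/
noncomputable def frob {α β : Type*} [Fintype α] [Fintype β] (A : Matrix α β ℝ) : ℝ :=
  Real.sqrt (∑ i, ∑ j, A i j ^ 2)

/-- The Kronecker-type operator acting by `A i` in mode `i`. -/
def kronOp {d : ℕ} {n : Fin d → ℕ} (A : ∀ i : Fin d, Matrix (Fin (n i)) (Fin (n i)) ℝ) :
    Matrix (∀ k : Fin d, Fin (n k)) (∀ k : Fin d, Fin (n k)) ℝ :=
  fun μ ν => ∏ i, A i (μ i) (ν i)

lemma kronOp_mul {d : ℕ} {n : Fin d → ℕ} (A B : ∀ i : Fin d, Matrix (Fin (n i)) (Fin (n i)) ℝ) :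
    kronOp A * kronOp B = kronOp (fun i => A i * B i) := by
  ext μ ν
  simp only [kronOp, Matrix.mul_apply, ← Finset.prod_mul_distrib]
  rw [Finset.prod_univ_sum, Fintype.piFinset_univ]

lemma kronOp_transpose {d : ℕ} {n : Fin d → ℕ}
    (A : ∀ i : Fin d, Matrix (Fin (n i)) (Fin (n i)) ℝ) :
    (kronOp A)ᵀ = kronOp (fun i => (A i)ᵀ) := by
  ext μ ν
  simp [kronOp]

lemma kronOp_one {d : ℕ} {n : Fin d → ℕ} :
    kronOp (fun i : Fin d => (1 : Matrix (Fin (n i)) (Fin (n i)) ℝ)) = 1 := by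
  ext μ ν
  simp only [kronOp, Matrix.one_apply, Finset.prod_ite_zero, funext_iff]
  simp

lemma proj_split {ι : Type*} [Fintype ι] (P : Matrix ι ι ℝ) (hs : Pᵀ = P) (hi : P * P = P)
    (u w : ι → ℝ) :
    (u - P *ᵥ w) ⬝ᵥ (u - P *ᵥ w) ≤
      (u - P *ᵥ u) ⬝ᵥ (u - P *ᵥ u) + (u - w) ⬝ᵥ (u - w) := by
  have key : ∀ a b : ι → ℝ, (P *ᵥ a) ⬝ᵥ (P *ᵥ b) = a ⬝ᵥ (P *ᵥ b) := by
    intro a b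
    rw [← Matrix.vecMul_transpose, hs, ← Matrix.dotProduct_mulVec, Matrix.mulVec_mulVec, hi]
  have sym : ∀ a b : ι → ℝ, a ⬝ᵥ (P *ᵥ b) = b ⬝ᵥ (P *ᵥ a) := by
    intro a b
    rw [← key a b, ← key b a, dotProduct_comm]
  have hnn : 0 ≤ ((u - w) - P *ᵥ (u - w)) ⬝ᵥ ((u - w) - P *ᵥ (u - w)) :=
    Finset.sum_nonneg fun i _ => mul_self_nonneg _
  simp only [Matrix.mulVec_sub, sub_dotProduct, dotProduct_sub, key] at hnn ⊢
  have h1 := dotProduct_comm (P *ᵥ w) u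
  have h2 := dotProduct_comm (P *ᵥ u) u
  have h3 := dotProduct_comm (P *ᵥ u) w
  have h4 := dotProduct_comm (P *ᵥ w) w
  have h5 := sym u w
  linarith

lemma split_sum {d : ℕ} {n : Fin d → ℕ} (i : Fin d) (f : (∀ k : Fin d, Fin (n k)) → ℝ) :
    ∑ μ, f μ = ∑ a, ∑ b, modeMat d n f i a b := by
  refine Eq.trans ?_ (Fintype.sum_prod_type'
    (f := fun a b => modeMat d n f i a b))
  refine Fintype.sum_equiv (Equiv.piSplitAt i (fun k => Fin (n k))) _ _ fun μ => ?_
  simp only [modeMat, Equiv.piSplitAt_apply]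
  congr 1
  ext k
  by_cases h : k = i
  · subst h; simp
  · simp [h]

lemma modeMat_kron {d : ℕ} {n : Fin d → ℕ} (i : Fin d)
    (P : ∀ i : Fin d, Matrix (Fin (n i)) (Fin (n i)) ℝ) (x : (∀ k : Fin d, Fin (n k)) → ℝ) :
    modeMat d n (kronOp (fun j => if j ∈ ({i} : Finset (Fin d)) then P j else 1) *ᵥ x) i
      = P i * modeMat d n x i := by
  ext a b
  rw [Matrix.mul_apply]
  have : modeMat d n (kronOp (fun j => if j ∈ ({i} : Finset (Fin d)) then P j else 1) *ᵥ x) i a b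
     = ∑ ν, kronOp (fun j => if j ∈ ({i} : Finset (Fin d)) then P j else 1)
      (fun k => if h : k = i then Fin.cast (congrArg n h).symm a else b ⟨k, h⟩) ν * x ν := rfl
  rw [this, split_sum i]
  refine Finset.sum_congr rfl fun c _ => ?_
  rw [Finset.sum_eq_single b]
  · simp only [modeMat, kronOp]
    congr 1
    rw [Finset.prod_eq_single i]
    · simp
    · intro j _ hj
      simp only [hj, Finset.mem_singleton, if_false, dif_neg, not_false_eq_true]
      exact Matrix.one_apply_eq _
    · simp
  · intro b' _ hb
    obtain ⟨k, hk⟩ := Function.ne_iff.mp hb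
    simp only [modeMat, kronOp]
    rw [Finset.prod_eq_zero (Finset.mem_univ k.1), zero_mul]
    simp [k.2, Matrix.one_apply, Ne.symm hk]
  · simp

lemma exists_frame {m r : ℕ} {β : Type*} [Fintype β] (M : Matrix (Fin m) β ℝ) (hr : M.rank ≤ r)
    (hrm : r ≤ m) : ∃ V : Matrix (Fin m) (Fin r) ℝ, Vᵀ * V = 1 ∧ V * Vᵀ * M = M := by
  classical
  set W : Submodule ℝ (EuclideanSpace ℝ (Fin m)) :=
    Submodule.span ℝ (Set.range fun j => WithLp.toLp 2 (M.col j)) with hW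
  have hWr : Module.finrank ℝ W ≤ r := by
    refine le_trans (le_of_eq ?_) hr
    rw [Matrix.rank_eq_finrank_span_cols]
    have : W = (Submodule.span ℝ (Set.range M.col)).map
        (WithLp.linearEquiv 2 ℝ (Fin m → ℝ)).symm.toLinearMap := by
      rw [Submodule.map_span, ← Set.range_comp]; rfl
    rw [this]
    exact LinearEquiv.finrank_map_eq _ _
  let b0 := stdOrthonormalBasis ℝ W
  let v : Fin m → EuclideanSpace ℝ (Fin m) := fun i =>
    if h : i.1 < Module.finrank ℝ W then (b0 ⟨i.1, h⟩ : EuclideanSpace ℝ (Fin m)) else 0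
  let s : Set (Fin m) := {i | i.1 < Module.finrank ℝ W}
  have hv : Orthonormal ℝ (s.domRestrict v) := by
    have h1 : Orthonormal ℝ (fun i => (b0 i : EuclideanSpace ℝ (Fin m))) :=
      b0.orthonormal.comp_linearIsometry W.subtypeₗᵢ
    have h2 := h1.comp (fun i : s => (⟨i.1.1, i.2⟩ : Fin (Module.finrank ℝ W)))
      (fun i j h => by
        apply Subtype.ext; apply Fin.ext; simpa using h)
    convert h2 using 1
    ext1 i
    have : i.1.1 < Module.finrank ℝ W := i.2
    change v i.1 = _
    simp [v, this]
  obtain ⟨b, hb⟩ := hv.exists_orthonormalBasis_extension_of_card_eq (by simp)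
  let V : Matrix (Fin m) (Fin r) ℝ := fun i j => b (Fin.castLE hrm j) i
  have hVV : Vᵀ * V = 1 := by
    ext i j
    have := orthonormal_iff_ite.mp b.orthonormal (Fin.castLE hrm i) (Fin.castLE hrm j)
    simp only [PiLp.inner_apply, Fin.castLE_inj] at this
    rw [Matrix.one_apply, ← this, Matrix.mul_apply]
    refine Finset.sum_congr rfl fun k _ => ?_
    change b (Fin.castLE hrm i) k * b (Fin.castLE hrm j) k = _
    simp [mul_comm]
  have hWle : W ≤ Submodule.span ℝ (Set.range fun j : Fin r => b (Fin.castLE hrm j)) := by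
    intro w hw
    have := b0.sum_repr ⟨w, hw⟩
    have h2 := congrArg (W.subtype) this
    rw [map_sum] at h2
    rw [show w = W.subtype ⟨w, hw⟩ from rfl, ← h2]
    refine Submodule.sum_mem _ fun i _ => ?_
    rw [map_smul]
    refine Submodule.smul_mem _ _ (Submodule.subset_span ⟨⟨i.1, i.2.trans_le hWr⟩, ?_⟩)
    have hi : (Fin.castLE hrm ⟨i.1, i.2.trans_le hWr⟩) ∈ s := i.2
    change b (Fin.castLE hrm ⟨i.1, i.2.trans_le hWr⟩) = _
    rw [hb _ hi]
    simp [v]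
  have hC : ∀ j, ∃ c : Fin r → ℝ, ∑ k, c k • b (Fin.castLE hrm k) = WithLp.toLp 2 (M.col j) := by
    intro j
    exact (Submodule.mem_span_range_iff_exists_fun ℝ).mp
      (hWle (Submodule.subset_span ⟨j, rfl⟩))
  choose C hC using hC
  have hM : M = V * (Matrix.of C)ᵀ := by
    ext i j
    have := congrArg (fun w : EuclideanSpace ℝ (Fin m) => w i) (hC j)
    simp at this
    rw [← this, Matrix.mul_apply]
    refine Finset.sum_congr rfl fun k _ => ?_
    simp [V, mul_comm]
  refine ⟨V, hVV, ?_⟩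
  rw [hM, Matrix.mul_assoc, ← Matrix.mul_assoc Vᵀ, hVV, Matrix.one_mul]

lemma frob_proj_le {m r : ℕ} {β : Type*} [Fintype β] (V : Matrix (Fin m) (Fin r) ℝ)
    (hV : Vᵀ * V = 1) (A B : Matrix (Fin m) β ℝ) (hB : V * Vᵀ * B = B) :
    frob (A - V * Vᵀ * A) ≤ frob (A - B) := by
  have hs : (V * Vᵀ)ᵀ = V * Vᵀ := by simp
  have hi : (V * Vᵀ) * (V * Vᵀ) = V * Vᵀ := by
    rw [Matrix.mul_assoc, ← Matrix.mul_assoc Vᵀ, hV, Matrix.one_mul]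
  refine Real.sqrt_le_sqrt ?_
  rw [Finset.sum_comm, Finset.sum_comm (f := fun i j => (A - B) i j ^ 2)]
  refine Finset.sum_le_sum fun j _ => ?_
  have hs' : (1 - V * Vᵀ)ᵀ = 1 - V * Vᵀ := by rw [Matrix.transpose_sub, hs, Matrix.transpose_one]
  have hi' : (1 - V * Vᵀ) * (1 - V * Vᵀ) = 1 - V * Vᵀ := by
    rw [Matrix.mul_sub, Matrix.sub_mul _ _ (V * Vᵀ), hi]; simp
  -- apply `proj_split` with `u = 0`
  have h := proj_split (1 - V * Vᵀ) hs' hi' 0 ((A - B).col j)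
  have e : (1 - V * Vᵀ) *ᵥ (A - B).col j = (A - V * Vᵀ * A).col j := by
    have h0 : (1 - V * Vᵀ) * (A - B) = A - V * Vᵀ * A := by
      rw [Matrix.mul_sub, Matrix.sub_mul, Matrix.sub_mul, hB]; simp
    rw [← h0]
    ext i
    simp [Matrix.mulVec, dotProduct, Matrix.mul_apply]
  rw [e] at h
  simp only [Matrix.mulVec_zero, sub_zero, zero_sub, neg_dotProduct_neg, dotProduct_zero,
    zero_add] at h
  simpa only [dotProduct, pow_two, Matrix.col_apply] using h

lemma modeMat_sub {d : ℕ} {n : Fin d → ℕ} (x y : (∀ k : Fin d, Fin (n k)) → ℝ) (i : Fin d) :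
    modeMat d n (x - y) i = modeMat d n x i - modeMat d n y i := rfl

lemma frob_modeMat_sq {d : ℕ} {n : Fin d → ℕ} (x : (∀ k : Fin d, Fin (n k)) → ℝ) (i : Fin d) :
    frob (modeMat d n x i) ^ 2 = x ⬝ᵥ x := by
  rw [frob, Real.sq_sqrt (by positivity), dotProduct, split_sum i]
  refine Finset.sum_congr rfl fun a _ => Finset.sum_congr rfl fun b _ => ?_
  simp [modeMat, pow_two]

lemma hosvd_telescope {d : ℕ} {n : Fin d → ℕ}
    (P : ∀ i : Fin d, Matrix (Fin (n i)) (Fin (n i)) ℝ) (hs : ∀ i, (P i)ᵀ = P i)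
    (hi : ∀ i, P i * P i = P i) (x : (∀ k : Fin d, Fin (n k)) → ℝ) (S : Finset (Fin d)) :
    (x - kronOp (fun j => if j ∈ S then P j else 1) *ᵥ x) ⬝ᵥ
      (x - kronOp (fun j => if j ∈ S then P j else 1) *ᵥ x) ≤
    ∑ i ∈ S, (frob (modeMat d n x i - P i * modeMat d n x i)) ^ 2 := by
  induction S using Finset.induction_on with
  | empty => simp [kronOp_one]
  | insert i S hiS ih =>
    rw [Finset.sum_insert hiS]
    have e : kronOp (fun j => if j ∈ insert i S then P j else 1) =
        kronOp (fun j => if j ∈ ({i} : Finset (Fin d)) then P j else 1) *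
          kronOp (fun j => if j ∈ S then P j else 1) := by
      rw [kronOp_mul]
      congr 1
      ext1 j
      by_cases h : j = i
      · subst h; simp [hiS]
      · simp [h]
    rw [e, ← Matrix.mulVec_mulVec, ← modeMat_kron, ← modeMat_sub, frob_modeMat_sq]
    refine (proj_split _ ?_ ?_ _ _).trans (by gcongr)
    · rw [kronOp_transpose]
      congr 1
      ext1 j
      split_ifs <;> simp [hs]
    · rw [kronOp_mul]
      congr 1
      ext1 j
      split_ifs <;> simp [hi]

/-- **Quasi-optimality of the truncated higher order SVD (HOSVD)**.

Let `x ∈ ℝ^{n_0 × … × n_{d-1}}` and let `rs` be a Tucker rank tuple.  For each mode `i`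
let `U i ∈ ℝ^{n_i × rs i}` be the orthonormal matrix of leading left singular vectors of
the mode-`i` matricization `M_{{i}}(x)` — characterized by the property that among all
matrices `V` with `rs i` orthonormal columns, the projection `U i (U i)ᵀ M_{{i}}(x)`
is closest to `M_{{i}}(x)` in the Frobenius norm.  Let `x*` be obtained from `x` by
multiplying each mode `i` with the orthogonal projector `U i (U i)ᵀ`.  Then
`‖x − x*‖_F ≤ √d · min_{y : T-rank(y) ⪯ rs} ‖x − y‖_F`, where the Tucker rank of `y` is
the tuple of the ranks of its single-mode matricizations. -/
theorem truncated_hosvd_quasi_optimal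
    (d : ℕ) (n : Fin d → ℕ) (x : (∀ k : Fin d, Fin (n k)) → ℝ)
    (rs : Fin d → ℕ)
    (U : ∀ i : Fin d, Matrix (Fin (n i)) (Fin (rs i)) ℝ)
    -- `U i` has orthonormal columns …
    (hU : ∀ i, (U i)ᵀ * U i = 1)
    -- … spanning a leading left singular subspace of `M_{{i}}(x)`
    (hLead : ∀ i, ∀ V : Matrix (Fin (n i)) (Fin (rs i)) ℝ, Vᵀ * V = 1 →
      frob (modeMat d n x i - U i * (U i)ᵀ * modeMat d n x i) ≤
        frob (modeMat d n x i - V * Vᵀ * modeMat d n x i))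
    -- `x*` is `x` multiplied in each mode `i` by the orthogonal projector `U i (U i)ᵀ`
    (xstar : (∀ k : Fin d, Fin (n k)) → ℝ)
    (hxstar : ∀ μ, xstar μ =
      ∑ ν : ∀ k : Fin d, Fin (n k), x ν * ∏ i : Fin d, (U i * (U i)ᵀ) (μ i) (ν i)) :
    Real.sqrt (∑ μ, (x μ - xstar μ) ^ 2) ≤
      Real.sqrt (d : ℝ) *
        sInf {e : ℝ | ∃ y : (∀ k : Fin d, Fin (n k)) → ℝ,
          (∀ i : Fin d, (modeMat d n y i).rank ≤ rs i) ∧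
            e = Real.sqrt (∑ μ, (x μ - y μ) ^ 2)} := by
  have hrn : ∀ i, rs i ≤ n i := by
    intro i
    have h1 : ((U i)ᵀ * U i).rank ≤ (U i)ᵀ.rank := Matrix.rank_mul_le_left _ _
    rw [hU i, Matrix.rank_one, Fintype.card_fin, Matrix.rank_transpose] at h1
    simpa using h1.trans (Matrix.rank_le_height (U i))
  have hx : xstar =
      kronOp (fun j => if j ∈ (Finset.univ : Finset (Fin d)) then U j * (U j)ᵀ else 1) *ᵥ x := by
    ext μ
    rw [hxstar]
    simp [kronOp, Matrix.mulVec, dotProduct, mul_comm]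
  have htel := hosvd_telescope (fun i => U i * (U i)ᵀ) (by simp)
    (fun i => by rw [Matrix.mul_assoc, ← Matrix.mul_assoc (U i)ᵀ, hU, Matrix.one_mul]) x
    Finset.univ
  rw [← hx] at htel
  have main : ∀ y : (∀ k : Fin d, Fin (n k)) → ℝ,
      (∀ i : Fin d, (modeMat d n y i).rank ≤ rs i) →
      Real.sqrt (∑ μ, (x μ - xstar μ) ^ 2) ≤
        Real.sqrt (d : ℝ) * Real.sqrt (∑ μ, (x μ - y μ) ^ 2) := by
    intro y hy
    rw [← Real.sqrt_mul (Nat.cast_nonneg d)]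
    refine Real.sqrt_le_sqrt ?_
    have h1 : ∑ μ, (x μ - xstar μ) ^ 2 = (x - xstar) ⬝ᵥ (x - xstar) := by
      simp [dotProduct, pow_two]
    have h2 : ∑ μ, (x μ - y μ) ^ 2 = (x - y) ⬝ᵥ (x - y) := by
      simp [dotProduct, pow_two]
    rw [h1, h2]
    refine htel.trans ?_
    have : ∀ i ∈ (Finset.univ : Finset (Fin d)),
        frob (modeMat d n x i - U i * (U i)ᵀ * modeMat d n x i) ^ 2 ≤ (x - y) ⬝ᵥ (x - y) := by
      intro i _
      obtain ⟨V, hV, hVM⟩ := exists_frame (modeMat d n y i) (hy i) (hrn i)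
      rw [← frob_modeMat_sq (x - y) i, modeMat_sub]
      have h3 := (hLead i V hV).trans (frob_proj_le V hV (modeMat d n x i) _ hVM)
      exact pow_le_pow_left₀ (Real.sqrt_nonneg _) h3 2
    refine (Finset.sum_le_sum this).trans (le_of_eq ?_)
    rw [Finset.sum_const, Finset.card_univ, Fintype.card_fin, nsmul_eq_mul]
  have hz : ∀ i : Fin d, (modeMat d n 0 i).rank ≤ rs i := by
    intro i
    have : modeMat d n 0 i = 0 := rfl
    rw [this, Matrix.rank_zero]
    exact Nat.zero_le _
  rcases Nat.eq_zero_or_pos d with hd | hd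
  · have h0 := main 0 hz
    have hd0 : Real.sqrt (d : ℝ) = 0 := by simp [hd]
    rw [hd0, zero_mul] at h0 ⊢
    exact h0
  · have hpos : 0 < Real.sqrt (d : ℝ) := Real.sqrt_pos.mpr (by exact_mod_cast hd)
    rw [← div_le_iff₀' hpos]
    refine le_csInf ⟨_, 0, hz, rfl⟩ ?_
    rintro e ⟨y, hy, rfl⟩
    rw [div_le_iff₀' hpos]
    exact main y hy
end

section
/- Let W_2,…,W_d be component tensors (W_i ∈ ℝ^{s_{i-1}×n_i×s_i} for 2 ≤ i ≤ d−1, W_d ∈ ℝ^{s_{d-1}×n_d}) such that for each i the flattening of W_i separating its first mode from the remaining modes has orthonormal rows. Then the linear map P_{2..d} : ℝ^{n_1×…×n_d} → ℝ^{n_1×…×n_d} defined by P_{2..d}(x) := x ∘_{(2,…,d),(2,…,d)} ((W_2 ∘ … ∘ W_d) ∘_{1,1} (W_2 ∘ … ∘ W_d)) is an orthogonal projection with respect to the Euclidean inner product: P_{2..d} ∘ P_{2..d} = P_{2..d} and ⟨P_{2..d}(x), y⟩ = ⟨x, P_{2..d}(y)⟩ for all x, y. In particular ‖x − P_{2..d}(x)‖²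 = ‖x‖² − ‖P_{2..d}(x)‖². -/
open MeasureTheory ProbabilityTheory

/-- The index type for the first `j` modes of an order `d` tensor. -/
def PIdx (d : ℕ) (n : Fin d → ℕ) (j : ℕ) : Type := (k : Fin d) → k.val < j → Fin (n k)

/-- The index type for the modes `j, …, d-1` of an order `d` tensor. -/
def SIdx (d : ℕ) (n : Fin d → ℕ) (j : ℕ) : Type := (k : Fin d) → j ≤ k.val → Fin (n k)

instance (d : ℕ) (n : Fin d → ℕ) (j : ℕ) : Fintype (PIdx d n j) := by
  unfold PIdx; infer_instance

instance (d : ℕ) (n : Fin d → ℕ) (j : ℕ) : Fintype (SIdx d n j) := by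
  unfold SIdx; infer_instance

/-- Append one further index to a prefix-index. -/
def PIdx.snoc {d : ℕ} {n : Fin d → ℕ} {j : ℕ} (i : PIdx d n j) (k0 : Fin d)
    (h : k0.val = j) (μ : Fin (n k0)) : PIdx d n (j + 1) := fun k hk =>
  if hlt : k.val < j then i k hlt
  else
    have hkk : k = k0 := Fin.ext (by omega)
    Fin.cast (congrArg n hkk).symm μ

/-- The chain (tensor train) contraction of the components `W c, …, W (d-1)`:
a tensor with one bond mode of dimension `q c` and the physical modes `c, …, d-1`;
`m` is the number of physical modes, i.e. `c + m = d`. -/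
def chainT (d : ℕ) (n : Fin d → ℕ) (q : ℕ → ℕ)
    (W : (k : ℕ) → (hk : k < d) → Fin (q k) → Fin (n ⟨k, hk⟩) → Fin (q (k + 1)) → ℝ) :
    (m c : ℕ) → c + m = d → Fin (q c) → SIdx d n c → ℝ
  | 0, _, _ => fun _ _ => 1
  | m + 1, c, h => fun α j =>
      have hc : c < d := by omega
      ∑ β : Fin (q (c + 1)),
        W c hc α (j ⟨c, hc⟩ (le_refl c)) β *
          chainT d n q W m (c + 1) (by omega) β (fun k hk => j k (by omega))

/-- Merge a full prefix (taken from `i`) with a suffix index `j`. -/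
def mergeIdx {d : ℕ} {n : Fin d → ℕ} (c : ℕ) (i : ∀ k : Fin d, Fin (n k))
    (j : SIdx d n c) : ∀ k : Fin d, Fin (n k) := fun k =>
  if h : c ≤ k.val then j k h else i k

/-- The orthogonal projection `z ↦ z ∘_{(c+1,…,d),(c+1,…,d)}
`((W_c∘…∘W_{d-1}) ∘_{1,1} (W_c∘…∘W_{d-1}))` (0-based modes `c, …, d-1`). -/
noncomputable def Pmap (d : ℕ) (n : Fin d → ℕ) (q : ℕ → ℕ)
    (W : (k : ℕ) → (hk : k < d) → Fin (q k) → Fin (n ⟨k, hk⟩) → Fin (q (k + 1)) → ℝ)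
    (m c : ℕ) (h : c + m = d) (z : (∀ k : Fin d, Fin (n k)) → ℝ) :
    (∀ k : Fin d, Fin (n k)) → ℝ := fun i =>
  ∑ α : Fin (q c), ∑ j : SIdx d n c,
    z (mergeIdx c i j) * chainT d n q W m c h α j *
      chainT d n q W m c h α (fun k _ => i k)

/-- A tensor train representation of `x` with rank tuple `ρ`. -/
def IsTTRepr (d : ℕ) (n : Fin d → ℕ) (x : (∀ k : Fin d, Fin (n k)) → ℝ)
    (ρ : Fin (d + 1) → ℕ) : Prop :=
  ρ 0 = 1 ∧ ρ (Fin.last d) = 1 ∧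
    ∃ Gc : (k : Fin d) → Fin (n k) → Fin (ρ k.castSucc) → Fin (ρ k.succ) → ℝ,
      ∀ i, x i = ∑ jj : (∀ m : Fin (d + 1), Fin (ρ m)),
        ∏ k : Fin d, Gc k (i k) (jj k.castSucc) (jj k.succ)

/-- `x` has TT-rank at most `(r, …, r)`. -/
def TTRankLe (d : ℕ) (n : Fin d → ℕ) (x : (∀ k : Fin d, Fin (n k)) → ℝ) (r : ℕ) : Prop :=
  ∃ ρ, IsTTRepr d n x ρ ∧ ∀ m : Fin (d + 1), 0 < m.val → m.val < d → ρ m ≤ r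


/-- Split off the first mode of a suffix index. -/
def SIdx.splitEquiv (d : ℕ) (n : Fin d → ℕ) (c : ℕ) (hc : c < d) :
    SIdx d n c ≃ Fin (n ⟨c, hc⟩) × SIdx d n (c + 1) where
  toFun j := (j ⟨c, hc⟩ (le_refl c), fun k hk => j k (by omega))
  invFun p := fun k hk =>
    if h : c + 1 ≤ k.val then p.2 k h
    else
      have hkk : k = ⟨c, hc⟩ := Fin.ext (by simp only; omega)
      Fin.cast (congrArg n hkk).symm p.1
  left_inv j := by
    funext k hk
    by_cases h : c + 1 ≤ k.val
    · simp [h]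
    · have hkk : k = ⟨c, hc⟩ := Fin.ext (by simp only; omega)
      subst hkk
      simp
  right_inv p := by
    refine Prod.ext ?_ ?_
    · simp
    · funext k hk
      simp [hk]

lemma chainT_orth (d : ℕ) (n : Fin d → ℕ) (q : ℕ → ℕ) (hqd : q d = 1)
    (W : (k : ℕ) → (hk : k < d) → Fin (q k) → Fin (n ⟨k, hk⟩) → Fin (q (k + 1)) → ℝ)
    (hOrtho : ∀ k (h1 : 1 ≤ k) (hk : k < d) (α α' : Fin (q k)),
      (∑ μ : Fin (n ⟨k, hk⟩), ∑ β : Fin (q (k + 1)), W k hk α μ β * W k hk α' μ β)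
        = if α = α' then 1 else 0) (m : ℕ) :
    ∀ (c : ℕ) (h : c + m = d), 1 ≤ c → ∀ α α' : Fin (q c),
      ∑ j : SIdx d n c, chainT d n q W m c h α j * chainT d n q W m c h α' j
        = if α = α' then 1 else 0 := by
  induction m with
  | zero =>
    intro c h h1 α α'
    obtain rfl : c = d := by omega
    have : Subsingleton (Fin (q c)) := by rw [hqd]; infer_instance
    rw [if_pos (Subsingleton.elim α α')]
    let j0 : SIdx c n c := fun k hk => absurd k.isLt (by omega)
    have hall : ∀ j : SIdx c n c, j = j0 := fun j => by
      funext k hk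
      exact absurd k.isLt (by omega)
    rw [Fintype.sum_eq_single j0 (fun j hj => absurd (hall j) hj)]
    simp [chainT]
  | succ m ih =>
    intro c h h1 α α'
    have hc : c < d := by omega
    have hstep : ∀ (α : Fin (q c)) (j : SIdx d n c), chainT d n q W (m + 1) c h α j =
        ∑ β : Fin (q (c + 1)), W c hc α (SIdx.splitEquiv d n c hc j).1 β *
          chainT d n q W m (c + 1) (by omega) β (SIdx.splitEquiv d n c hc j).2 :=
      fun α j => rfl
    simp only [hstep]
    rw [Equiv.sum_comp (SIdx.splitEquiv d n c hc) (fun p =>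
      (∑ β : Fin (q (c + 1)), W c hc α p.1 β * chainT d n q W m (c + 1) (by omega) β p.2) *
      (∑ β : Fin (q (c + 1)), W c hc α' p.1 β * chainT d n q W m (c + 1) (by omega) β p.2)),
      Fintype.sum_prod_type, ← hOrtho c h1 hc α α']
    refine Finset.sum_congr rfl fun μ _ => ?_
    simp only [Finset.sum_mul_sum]
    rw [Finset.sum_comm]
    refine Finset.sum_congr rfl fun β _ => ?_
    rw [Finset.sum_comm]
    have : ∀ β' : Fin (q (c + 1)), ∑ j : SIdx d n (c + 1),
        W c hc α μ β * chainT d n q W m (c + 1) (by omega) β j *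
          (W c hc α' μ β' * chainT d n q W m (c + 1) (by omega) β' j) =
        W c hc α μ β * W c hc α' μ β' * if β = β' then 1 else 0 := by
      intro β'
      rw [← ih (c + 1) (by omega) (by omega) β β', Finset.mul_sum]
      exact Finset.sum_congr rfl fun j _ => by ring
    simp only [this]
    simp

/-- The suffix of a full index. -/
def restIdx {d : ℕ} {n : Fin d → ℕ} (c : ℕ) (i : ∀ k : Fin d, Fin (n k)) : SIdx d n c :=
  fun k _ => i k

lemma Pmap_eq (d : ℕ) (n : Fin d → ℕ) (q : ℕ → ℕ)
    (W : (k : ℕ) → (hk : k < d) → Fin (q k) → Fin (n ⟨k, hk⟩) → Fin (q (k + 1)) → ℝ)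
    (m c : ℕ) (h : c + m = d) (z : (∀ k : Fin d, Fin (n k)) → ℝ) (i : ∀ k : Fin d, Fin (n k)) :
    Pmap d n q W m c h z i = ∑ α : Fin (q c), ∑ j : SIdx d n c,
      z (mergeIdx c i j) * chainT d n q W m c h α j *
        chainT d n q W m c h α (restIdx c i) := rfl

lemma mergeIdx_rest {d : ℕ} {n : Fin d → ℕ} (c : ℕ) (i : ∀ k : Fin d, Fin (n k))
    (j : SIdx d n c) : restIdx c (mergeIdx c i j) = j := by
  funext k hk
  simp [restIdx, mergeIdx, hk]

lemma mergeIdx_merge {d : ℕ} {n : Fin d → ℕ} (c : ℕ) (i : ∀ k : Fin d, Fin (n k))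
    (j j' : SIdx d n c) : mergeIdx c (mergeIdx c i j) j' = mergeIdx c i j' := by
  funext k
  by_cases h : c ≤ k.val <;> simp [mergeIdx, h]

lemma mergeIdx_self {d : ℕ} {n : Fin d → ℕ} (c : ℕ) (i : ∀ k : Fin d, Fin (n k)) :
    mergeIdx c i (restIdx c i) = i := by
  funext k
  simp [restIdx, mergeIdx]

/-- Exchange the suffix of a full index with a suffix index. -/
def swapEquiv (d : ℕ) (n : Fin d → ℕ) (c : ℕ) :
    (∀ k : Fin d, Fin (n k)) × SIdx d n c ≃ (∀ k : Fin d, Fin (n k)) × SIdx d n c where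
  toFun p := (mergeIdx c p.1 p.2, restIdx c p.1)
  invFun p := (mergeIdx c p.1 p.2, restIdx c p.1)
  left_inv _ := Prod.ext ((mergeIdx_merge c _ _ _).trans (mergeIdx_self c _))
    (mergeIdx_rest c _ _)
  right_inv _ := Prod.ext ((mergeIdx_merge c _ _ _).trans (mergeIdx_self c _))
    (mergeIdx_rest c _ _)

lemma Pmap_symm (d : ℕ) (n : Fin d → ℕ) (q : ℕ → ℕ)
    (W : (k : ℕ) → (hk : k < d) → Fin (q k) → Fin (n ⟨k, hk⟩) → Fin (q (k + 1)) → ℝ)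
    (m c : ℕ) (h : c + m = d) (z y : (∀ k : Fin d, Fin (n k)) → ℝ) :
    (∑ i, Pmap d n q W m c h z i * y i) = ∑ i, z i * Pmap d n q W m c h y i := by
  simp only [Pmap_eq, Finset.sum_mul, Finset.mul_sum]
  rw [Finset.sum_comm, Finset.sum_comm (s := Finset.univ (α := ∀ k : Fin d, Fin (n k)))]
  refine Finset.sum_congr rfl fun α _ => ?_
  rw [← Fintype.sum_prod_type', ← Fintype.sum_prod_type']
  rw [← Equiv.sum_comp (swapEquiv d n c)]
  refine Finset.sum_congr rfl fun p _ => ?_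
  simp only [swapEquiv, Equiv.coe_fn_mk]
  rw [mergeIdx_merge, mergeIdx_self, mergeIdx_rest]
  ring

lemma Pmap_idem (d : ℕ) (n : Fin d → ℕ) (q : ℕ → ℕ)
    (W : (k : ℕ) → (hk : k < d) → Fin (q k) → Fin (n ⟨k, hk⟩) → Fin (q (k + 1)) → ℝ)
    (m c : ℕ) (h : c + m = d)
    (ho : ∀ α α' : Fin (q c),
      ∑ j : SIdx d n c, chainT d n q W m c h α j * chainT d n q W m c h α' j
        = if α = α' then 1 else 0)
    (z : (∀ k : Fin d, Fin (n k)) → ℝ) (i : ∀ k : Fin d, Fin (n k)) :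
    Pmap d n q W m c h (Pmap d n q W m c h z) i = Pmap d n q W m c h z i := by
  have key : ∀ j : SIdx d n c, Pmap d n q W m c h z (mergeIdx c i j) =
      ∑ α' : Fin (q c), (∑ j' : SIdx d n c, z (mergeIdx c i j') * chainT d n q W m c h α' j') *
        chainT d n q W m c h α' j := by
    intro j
    simp only [Pmap_eq, mergeIdx_merge, mergeIdx_rest, Finset.sum_mul]
  rw [Pmap_eq]
  simp only [key]
  rw [Pmap_eq]
  refine Finset.sum_congr rfl fun α _ => ?_
  rw [← Finset.sum_mul, ← Finset.sum_mul]
  congr 1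
  simp only [Finset.sum_mul (s := Finset.univ (α := Fin (q c)))]
  rw [Finset.sum_comm]
  simp only [mul_assoc, ← Finset.mul_sum, ho]
  simp

/-- **The map `P_{2..d}` is an orthogonal projection.**

Let `W_k ∈ ℝ^{q_k × n_k × q_{k+1}}` (0-based `k = 1, …, d-1`, trailing dummy bond
`q d = 1`, so the last component is `W_{d-1} ∈ ℝ^{q_{d-1} × n_{d-1}}`) be component
tensors such that the flattening of each `W_k` separating its first mode from the
remaining modes has orthonormal rows.  Then the linear map
`P_{2..d} : z ↦ z ∘_{(2,…,d),(2,…,d)} ((W_2∘…∘W_d) ∘_{1,1} (W_2∘…∘W_d))` is an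
orthogonal projection with respect to the Euclidean inner product: `P ∘ P = P` and
`⟨P z, y⟩ = ⟨z, P y⟩` for all `z, y`; in particular `‖z - P z‖² = ‖z‖² - ‖P z‖²`. -/
theorem Pmap_is_orthogonal_projection
    (d : ℕ) (hd : 1 ≤ d) (n : Fin d → ℕ) (q : ℕ → ℕ) (hqd : q d = 1)
    (W : (k : ℕ) → (hk : k < d) → Fin (q k) → Fin (n ⟨k, hk⟩) → Fin (q (k + 1)) → ℝ)
    -- the flattenings of the `W_k` have orthonormal rows
    (hOrtho : ∀ k (h1 : 1 ≤ k) (hk : k < d) (α α' : Fin (q k)),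
      (∑ μ : Fin (n ⟨k, hk⟩), ∑ β : Fin (q (k + 1)), W k hk α μ β * W k hk α' μ β)
        = if α = α' then 1 else 0) :
    (∀ (z : (∀ k : Fin d, Fin (n k)) → ℝ) (i : ∀ k : Fin d, Fin (n k)),
        Pmap d n q W (d - 1) 1 (by omega) (Pmap d n q W (d - 1) 1 (by omega) z) i =
          Pmap d n q W (d - 1) 1 (by omega) z i) ∧
      (∀ z y : (∀ k : Fin d, Fin (n k)) → ℝ,
        (∑ i, Pmap d n q W (d - 1) 1 (by omega) z i * y i) =
          ∑ i, z i * Pmap d n q W (d - 1) 1 (by omega) y i) ∧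
      ∀ z : (∀ k : Fin d, Fin (n k)) → ℝ,
        (∑ i, (z i - Pmap d n q W (d - 1) 1 (by omega) z i) ^ 2) =
          (∑ i, z i ^ 2) - ∑ i, Pmap d n q W (d - 1) 1 (by omega) z i ^ 2 := by
  have hi := fun z i => Pmap_idem d n q W (d - 1) 1 (by omega)
    (chainT_orth d n q hqd W hOrtho (d - 1) 1 (by omega) le_rfl) z i
  have hs := Pmap_symm d n q W (d - 1) 1 (by omega)
  refine ⟨hi, hs, fun z => ?_⟩
  have h1 := hs z (Pmap d n q W (d - 1) 1 (by omega) z)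
  simp only [hi] at h1
  have h2 : ∀ i, (z i - Pmap d n q W (d - 1) 1 (by omega) z i) ^ 2 =
      z i ^ 2 - 2 * (z i * Pmap d n q W (d - 1) 1 (by omega) z i) +
        Pmap d n q W (d - 1) 1 (by omega) z i * Pmap d n q W (d - 1) 1 (by omega) z i :=
    fun i => by ring
  simp only [h2, Finset.sum_add_distrib, Finset.sum_sub_distrib, ← Finset.mul_sum]
  simp only [pow_two (Pmap d n q W (d - 1) 1 _ z _)]
  linarith
end
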